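/- arXiv:1407.5110 — 3 statements merged into one kernel-verified Lean document; each statement's English description precedes it below -/
import Mathlib

section
/- Fix ε > 0 and b ≥ 5ε. For every integer j ≥ 1 there exists a constant c_j > 0 such that χ_{0,ε/3,b+ε}'(x) ≥ c_j · |χ_{0,ε,b}^{(j)}(x)| for all x ∈ ℝ, where χ^{(j)} denotes the j-th derivative. -/
open MeasureTheory Set

/-- The rescaled mollifier `ρ_ε(x) = ε⁻¹ ρ(x/ε)`. -/
noncomputable def mollifier (ρ : ℝ → ℝ) (ε : ℝ) (x : ℝ) : ℝ := ε⁻¹ * ρ (x / ε)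

/-- The piecewise linear ramp `ν_{ε,b}`. -/
noncomputable def nuFun (ε b : ℝ) (x : ℝ) : ℝ :=
  if x ≤ 2 * ε then 0 else if x ≤ b - ε then (x - 2 * ε) / (b - 3 * ε) else 1

/-- The cut-off function `χ_{0,ε,b} = ρ_ε ∗ ν_{ε,b}`. -/
noncomputable def chi0 (ρ : ℝ → ℝ) (ε b : ℝ) (x : ℝ) : ℝ :=
  ∫ y : ℝ, mollifier ρ ε (x - y) * nuFun ε b y

lemma nu_eq (δ B : ℝ) (h : 3 * δ < B) (x : ℝ) :
    nuFun δ B x = max 0 (min 1 ((x - 2 * δ) / (B - 3 * δ))) := by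
  have h' : 0 < B - 3 * δ := by linarith
  unfold nuFun
  split_ifs with h1 h2
  · rw [max_eq_left]
    exact (min_le_right _ _).trans (div_nonpos_of_nonpos_of_nonneg (by linarith) h'.le)
  · rw [min_eq_right, max_eq_right]
    · exact div_nonneg (by linarith) h'.le
    · rw [div_le_one h']; linarith
  · rw [min_eq_left, max_eq_right zero_le_one]
    rw [one_le_div h']; linarith

lemma nu_cont (δ B : ℝ) (h : 3 * δ < B) : Continuous (nuFun δ B) := by
  have : nuFun δ B = fun x => max 0 (min 1 ((x - 2 * δ) / (B - 3 * δ))) :=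
    funext (nu_eq δ B h)
  rw [this]; fun_prop

lemma nu_mono (δ B : ℝ) (h : 3 * δ < B) : Monotone (nuFun δ B) := by
  intro x y hxy
  have h' : 0 < B - 3 * δ := by linarith
  rw [nu_eq δ B h, nu_eq δ B h]
  gcongr

lemma chi_eq (ρ : ℝ → ℝ) (δ B x : ℝ) :
    chi0 ρ δ B x = ∫ y, mollifier ρ δ y * nuFun δ B (x - y) := by
  unfold chi0
  rw [← integral_sub_left_eq_self _ volume x]
  simp

section
variable {ρ : ℝ → ℝ}

lemma mol_smooth (hρs : ContDiff ℝ (⊤ : ℕ∞) ρ) (δ : ℝ) :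
    ContDiff ℝ (⊤ : ℕ∞) (mollifier ρ δ) := by
  unfold mollifier
  exact contDiff_const.mul (hρs.comp (contDiff_id.div_const δ))

lemma mol_zero (hρsupp : Function.support ρ ⊆ Set.Ioo (-1) 1) {δ : ℝ} (hδ : 0 < δ) (y : ℝ)
    (hy : y ∉ Set.Ioo (-δ) δ) : mollifier ρ δ y = 0 := by
  unfold mollifier
  have : ρ (y / δ) = 0 := by
    by_contra hne
    have := hρsupp (Function.mem_support.2 hne)
    apply hy
    have h1 := this.1
    have h2 := this.2
    rw [lt_div_iff₀ hδ] at h1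
    rw [div_lt_iff₀ hδ] at h2
    constructor <;> linarith
  rw [this, mul_zero]

lemma mol_supp (hρsupp : Function.support ρ ⊆ Set.Ioo (-1) 1) {δ : ℝ} (hδ : 0 < δ) :
    HasCompactSupport (mollifier ρ δ) :=
  HasCompactSupport.intro (isCompact_Icc (a := -δ) (b := δ)) fun y hy =>
    mol_zero hρsupp hδ y fun h => hy (Ioo_subset_Icc_self h)

lemma mol_int (hρint : ∫ x : ℝ, ρ x = 1) {δ : ℝ} (hδ : 0 < δ) :
    ∫ y, mollifier ρ δ y = 1 := by
  unfold mollifier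
  rw [integral_const_mul, Measure.integral_comp_div, hρint, abs_of_pos hδ]
  simp [hδ.ne']

lemma chi_smooth (hρs : ContDiff ℝ (⊤ : ℕ∞) ρ)
    (hρsupp : Function.support ρ ⊆ Set.Ioo (-1) 1) {δ B : ℝ} (hδ : 0 < δ) (h : 3 * δ < B) :
    ContDiff ℝ (⊤ : ℕ∞) (chi0 ρ δ B) := by
  have := (mol_supp hρsupp hδ).contDiff_convolution_left (ContinuousLinearMap.mul ℝ ℝ)
    (μ := volume) (mol_smooth hρs δ) (nu_cont δ B h).locallyIntegrable
  convert this using 1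
  ext x
  rw [chi_eq]; rfl

lemma mul_integrable (hρs : ContDiff ℝ (⊤ : ℕ∞) ρ)
    (hρsupp : Function.support ρ ⊆ Set.Ioo (-1) 1) {δ : ℝ} (hδ : 0 < δ)
    {φ : ℝ → ℝ} (hφ : Continuous φ) :
    Integrable (fun y => mollifier ρ δ y * φ y) :=
  ((mol_smooth hρs δ).continuous.mul hφ).integrable_of_hasCompactSupport
    (mol_supp hρsupp hδ).mul_right

lemma chi_mono (hρs : ContDiff ℝ (⊤ : ℕ∞) ρ) (hρ0 : ∀ x, 0 ≤ ρ x)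
    (hρsupp : Function.support ρ ⊆ Set.Ioo (-1) 1) {δ B : ℝ} (hδ : 0 < δ) (h : 3 * δ < B) :
    Monotone (chi0 ρ δ B) := by
  intro x z hxz
  rw [chi_eq, chi_eq]
  have hc := nu_cont δ B h
  refine integral_mono (mul_integrable hρs hρsupp hδ (by fun_prop))
    (mul_integrable hρs hρsupp hδ (by fun_prop)) fun y => ?_
  exact mul_le_mul_of_nonneg_left (nu_mono δ B h (by linarith))
    (mul_nonneg (inv_nonneg.2 hδ.le) (hρ0 _))

lemma chi_left (hρsupp : Function.support ρ ⊆ Set.Ioo (-1) 1) {δ B : ℝ} (hδ : 0 < δ)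
    {x : ℝ} (hx : x < δ) : chi0 ρ δ B x = 0 := by
  rw [chi_eq]
  refine integral_eq_zero_of_ae (Filter.Eventually.of_forall fun y => ?_)
  by_cases hy : y ∈ Ioo (-δ) δ
  · have : nuFun δ B (x - y) = 0 := by
      unfold nuFun; rw [if_pos]; linarith [hy.1]
    simp [this]
  · simp [mol_zero hρsupp hδ y hy]

lemma chi_right (hρsupp : Function.support ρ ⊆ Set.Ioo (-1) 1) (hρint : ∫ x : ℝ, ρ x = 1)
    {δ B : ℝ} (hδ : 0 < δ) (h : 3 * δ < B) {x : ℝ} (hx : B < x) : chi0 ρ δ B x = 1 := by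
  rw [chi_eq, ← mol_int hρint hδ]
  congr 1
  ext y
  by_cases hy : y ∈ Ioo (-δ) δ
  · have : nuFun δ B (x - y) = 1 := by
      unfold nuFun; rw [if_neg, if_neg] <;> linarith [hy.2]
    simp [this]
  · simp [mol_zero hρsupp hδ y hy]

lemma chi_mid (hρs : ContDiff ℝ (⊤ : ℕ∞) ρ)
    (hρsupp : Function.support ρ ⊆ Set.Ioo (-1) 1) (hρint : ∫ x : ℝ, ρ x = 1)
    {δ B : ℝ} (hδ : 0 < δ) {x : ℝ} (hx : x ∈ Ioo (3 * δ) (B - 2 * δ)) :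
    chi0 ρ δ B x = x / (B - 3 * δ)
      - ∫ y, mollifier ρ δ y * ((y + 2 * δ) / (B - 3 * δ)) := by
  have e : ∀ y, mollifier ρ δ y * nuFun δ B (x - y) =
      mollifier ρ δ y * (x / (B - 3 * δ)) - mollifier ρ δ y * ((y + 2 * δ) / (B - 3 * δ)) := by
    intro y
    by_cases hy : y ∈ Ioo (-δ) δ
    · have : nuFun δ B (x - y) = (x - y - 2 * δ) / (B - 3 * δ) := by
        unfold nuFun; rw [if_neg, if_pos] <;> linarith [hy.2, hy.1, hx.1, hx.2]
      rw [this]; ring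
    · simp [mol_zero hρsupp hδ y hy]
  rw [chi_eq]
  simp_rw [e]
  rw [integral_sub (mul_integrable hρs hρsupp hδ (by fun_prop))
    (mul_integrable hρs hρsupp hδ (by fun_prop)), integral_mul_const, mol_int hρint hδ, one_mul]

end

theorem statement1 (ρ : ℝ → ℝ) (hρs : ContDiff ℝ (⊤ : ℕ∞) ρ) (hρc : HasCompactSupport ρ)
    (hρ0 : ∀ x, 0 ≤ ρ x) (hρe : ∀ x, ρ (-x) = ρ x)
    (hρsupp : Function.support ρ ⊆ Set.Ioo (-1) 1) (hρint : ∫ x : ℝ, ρ x = 1)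
    (ε b : ℝ) (hε : 0 < ε) (hb : 5 * ε ≤ b) :
    ∀ j : ℕ, 1 ≤ j → ∃ c : ℝ, 0 < c ∧ ∀ x : ℝ,
      c * |iteratedDeriv j (chi0 ρ ε b) x| ≤ deriv (chi0 ρ (ε / 3) (b + ε)) x := by
  intro j hj
  have hbpos : 0 < b := by linarith
  have hδ : 0 < ε / 3 := by linarith
  have hB : 3 * (ε / 3) < b + ε := by linarith
  have hf := chi_smooth hρs hρsupp hε (show 3 * ε < b by linarith)
  have hg := chi_smooth hρs hρsupp hδ hB
  have hfc : Continuous (iteratedDeriv j (chi0 ρ ε b)) :=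
    hf.continuous_iteratedDeriv j (by exact_mod_cast le_top)
  have hgc : Continuous (deriv (chi0 ρ (ε / 3) (b + ε))) :=
    hg.continuous_deriv (by exact_mod_cast le_top)
  have hg0 : ∀ x, 0 ≤ deriv (chi0 ρ (ε / 3) (b + ε)) x := fun x =>
    (chi_mono hρs hρ0 hρsupp hδ hB).deriv_nonneg
  have hgm : ∀ x ∈ Ioo ε b, deriv (chi0 ρ (ε / 3) (b + ε)) x = 1 / b := by
    intro x hx
    have : chi0 ρ (ε / 3) (b + ε) =ᶠ[nhds x] fun x => x / (b + ε - 3 * (ε / 3))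
      - ∫ y, mollifier ρ (ε / 3) y * ((y + 2 * (ε / 3)) / (b + ε - 3 * (ε / 3))) := by
      filter_upwards [Ioo_mem_nhds hx.1 hx.2] with z hz
      exact chi_mid hρs hρsupp hρint hδ ⟨by linarith [hz.1], by linarith [hz.2]⟩
    rw [this.deriv_eq, deriv_sub_const, deriv_div_const, deriv_id'']
    congr 1; ring
  have hgm' : ∀ x ∈ Icc ε b, deriv (chi0 ρ (ε / 3) (b + ε)) x = 1 / b := by
    have : EqOn (deriv (chi0 ρ (ε / 3) (b + ε))) (fun _ => 1 / b) (closure (Ioo ε b)) :=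
      EqOn.closure hgm hgc continuous_const
    rwa [closure_Ioo (by linarith)] at this
  obtain ⟨C, hC⟩ := (isCompact_Icc (a := ε) (b := b)).exists_bound_of_continuousOn hfc.continuousOn
  have hj0 : j ≠ 0 := by omega
  refine ⟨1 / (b * (|C| + 1)), by positivity, fun x => ?_⟩
  by_cases hx : x ∈ Icc ε b
  · rw [hgm' x hx]
    have h1 := hC x hx
    rw [Real.norm_eq_abs] at h1
    have h2 : |iteratedDeriv j (chi0 ρ ε b) x| ≤ |C| + 1 := by linarith [le_abs_self C]
    calc _ ≤ 1 / (b * (|C| + 1)) * (|C| + 1) := by gcongr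
      _ = 1 / b := by field_simp
  · have : iteratedDeriv j (chi0 ρ ε b) x = 0 := by
      rcases lt_or_ge x ε with h | h
      · have : chi0 ρ ε b =ᶠ[nhds x] fun _ => 0 := by
          filter_upwards [Iio_mem_nhds h] with z hz
          exact chi_left hρsupp hε hz
        rw [this.iteratedDeriv_eq]; simp [iteratedDeriv_const, hj0]
      · have h' : b < x := by
          by_contra h''; exact hx ⟨h, not_lt.1 h''⟩
        have : chi0 ρ ε b =ᶠ[nhds x] fun _ => 1 := by
          filter_upwards [Ioi_mem_nhds h'] with z hz
          exact chi_right hρsupp hρint hε (by linarith) hz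
        rw [this.iteratedDeriv_eq]; simp [iteratedDeriv_const, hj0]
    rw [this]; simpa using hg0 x
end

section
/- Fix ε > 0 and b ≥ 5ε, and for each nonnegative integer n set χ_{n,ε,b}(x) = x^n · χ_{0,ε,b}(x). Then for every nonnegative integer n and all x ∈ ℝ, χ_{n+1,ε,b}'(x) ≥ (n+1) · χ_{n,ε,b}(x). -/
open MeasureTheory Set

/-- The weighted cut-off `χ_{n,ε,b}(x) = x^n χ_{0,ε,b}(x)`. -/
noncomputable def chiN (ρ : ℝ → ℝ) (n : ℕ) (ε b : ℝ) (x : ℝ) : ℝ :=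
  x ^ n * chi0 ρ ε b x

theorem nu_mono_aux (ε b : ℝ) (hε : 0 < ε) (hb : 5 * ε ≤ b) : Monotone (nuFun ε b) := by
  intro x y h
  have h3 : 0 < b - 3 * ε := by linarith
  unfold nuFun
  split_ifs <;> first
    | linarith
    | (apply div_nonneg <;> linarith)
    | (rw [div_le_one h3]; linarith)
    | (apply div_le_div_of_nonneg_right _ h3.le; linarith)

theorem statement4 (ρ : ℝ → ℝ) (hρs : ContDiff ℝ (⊤ : ℕ∞) ρ) (hρc : HasCompactSupport ρ)
    (hρ0 : ∀ x, 0 ≤ ρ x) (hρe : ∀ x, ρ (-x) = ρ x)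
    (hρsupp : Function.support ρ ⊆ Set.Ioo (-1) 1) (hρint : ∫ x : ℝ, ρ x = 1)
    (ε b : ℝ) (hε : 0 < ε) (hb : 5 * ε ≤ b) :
    ∀ n : ℕ, ∀ x : ℝ,
      ((n : ℝ) + 1) * chiN ρ n ε b x ≤ deriv (chiN ρ (n + 1) ε b) x := by
  have hmono := nu_mono_aux ε b hε hb
  have hli : LocallyIntegrable (nuFun ε b) := hmono.locallyIntegrable
  have hmc : HasCompactSupport (mollifier ρ ε) := by
    have h1 : HasCompactSupport (fun x => ρ (x / ε)) := by
      have := hρc.comp_homeomorph (Homeomorph.mulRight₀ (ε⁻¹) (inv_ne_zero hε.ne'))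
      simpa [Function.comp_def, div_eq_mul_inv] using this
    exact h1.mul_left (f := fun _ => ε⁻¹)
  have hms : ContDiff ℝ (⊤ : ℕ∞) (mollifier ρ ε) := by
    unfold mollifier
    exact contDiff_const.mul (hρs.comp (contDiff_id.div_const ε))
  have heq : chi0 ρ ε b = convolution (nuFun ε b) (mollifier ρ ε) (ContinuousLinearMap.mul ℝ ℝ) volume := by
    funext x
    simp [chi0, convolution, mul_comm]
  have hd : Differentiable ℝ (chi0 ρ ε b) := by
    rw [heq]
    exact (hmc.contDiff_convolution_right (n := (⊤ : ℕ∞)) _ hli hms).differentiable (by simp)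
  have hint : ∀ x, Integrable (fun t => mollifier ρ ε t * nuFun ε b (x - t)) := by
    intro x
    have := hmc.convolutionExists_left (ContinuousLinearMap.mul ℝ ℝ) hms.continuous hli x
    simpa [ConvolutionExistsAt] using this
  have heq2 : ∀ x, chi0 ρ ε b x = ∫ t, mollifier ρ ε t * nuFun ε b (x - t) := by
    intro x
    rw [← integral_sub_left_eq_self _ volume x]
    simp [chi0]
  have hm0 : ∀ x, 0 ≤ mollifier ρ ε x := fun x => mul_nonneg (inv_nonneg.2 hε.le) (hρ0 _)
  have hcm : Monotone (chi0 ρ ε b) := by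
    intro x y h
    rw [heq2, heq2]
    exact integral_mono (hint x) (hint y) fun t =>
      mul_le_mul_of_nonneg_left (hmono (by linarith)) (hm0 t)
  have hz : ∀ x < ε, chi0 ρ ε b x = 0 := by
    intro x hx
    rw [heq2]
    refine integral_eq_zero_of_ae (Filter.Eventually.of_forall fun t => ?_)
    by_cases ht : ρ (t / ε) = 0
    · simp [mollifier, ht]
    · have h1 := (hρsupp ht).1
      rw [lt_div_iff₀ hε] at h1
      have : x - t ≤ 2 * ε := by linarith
      simp [nuFun, this]
  intro n x
  have hD : deriv (chiN ρ (n + 1) ε b) x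
      = ((n : ℝ) + 1) * x ^ n * chi0 ρ ε b x + x ^ (n + 1) * deriv (chi0 ρ ε b) x := by
    have h := (hasDerivAt_pow (n + 1) x).mul (hd x).hasDerivAt
    have h2 := h.deriv
    simp only [Nat.cast_add, Nat.cast_one, Nat.add_sub_cancel] at h2
    exact h2
  rw [hD]
  have : 0 ≤ x ^ (n + 1) * deriv (chi0 ρ ε b) x := by
    rcases le_or_gt 0 x with h | h
    · exact mul_nonneg (pow_nonneg h _) hcm.deriv_nonneg
    · have : chi0 ρ ε b =ᶠ[nhds x] fun _ => 0 := by
        filter_upwards [Iio_mem_nhds (h.trans hε)] with y hy using hz y hy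
      simp [this.deriv_eq]
  unfold chiN
  linarith
end

section
/- Fix ε > 0, b ≥ 5ε, and a positive integer n. Then for each j ∈ {1, 2, 3} there exists a constant c > 0 (depending on n, b, j) such that |χ_{n,ε,b}^{(j)}(x)| ≤ c + χ_{n,ε,b}(x) for all x ∈ ℝ, where χ^{(j)} denotes the j-th derivative. -/
open MeasureTheory Set

lemma nuFun_eq (ε b : ℝ) (hε : 0 < ε) (hb : 5 * ε ≤ b) :
    nuFun ε b = fun x => max 0 (min 1 ((x - 2 * ε) / (b - 3 * ε))) := by
  funext x
  have h3 : 0 < b - 3 * ε := by linarith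
  unfold nuFun
  split_ifs with h1 h2
  · have : (x - 2 * ε) / (b - 3 * ε) ≤ 0 := div_nonpos_of_nonpos_of_nonneg (by linarith) h3.le
    rw [max_eq_left]
    exact (min_le_right _ _).trans this
  · have h4 : (x - 2 * ε) / (b - 3 * ε) ≤ 1 := by rw [div_le_one h3]; linarith
    have h5 : 0 ≤ (x - 2 * ε) / (b - 3 * ε) := div_nonneg (by linarith) h3.le
    rw [min_eq_right h4, max_eq_right h5]
  · have h4 : 1 ≤ (x - 2 * ε) / (b - 3 * ε) := by rw [one_le_div h3]; linarith
    rw [min_eq_left h4, max_eq_right zero_le_one]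

lemma nuFun_nonneg (ε b : ℝ) (hε : 0 < ε) (hb : 5 * ε ≤ b) (x : ℝ) : 0 ≤ nuFun ε b x := by
  rw [nuFun_eq ε b hε hb]; exact le_max_left _ _

lemma moll_zero (ρ : ℝ → ℝ) (hρsupp : Function.support ρ ⊆ Set.Ioo (-1) 1) (ε : ℝ) (hε : 0 < ε)
    (z : ℝ) (hz : ε ≤ |z|) : mollifier ρ ε z = 0 := by
  unfold mollifier
  have : ρ (z / ε) = 0 := by
    by_contra h
    have h1 : z / ε ∈ Set.Ioo (-1 : ℝ) 1 := hρsupp h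
    have h2 : |z / ε| < 1 := abs_lt.mpr h1
    rw [abs_div, abs_of_pos hε, div_lt_one hε] at h2
    linarith
  rw [this, mul_zero]

lemma moll_int (ρ : ℝ → ℝ) (hρint : ∫ x : ℝ, ρ x = 1) (ε : ℝ) (hε : 0 < ε) :
    ∫ x : ℝ, mollifier ρ ε x = 1 := by
  unfold mollifier
  rw [integral_const_mul, Measure.integral_comp_div ρ ε, hρint, abs_of_pos hε]
  simp [hε.ne']

lemma chi0_contDiff (ρ : ℝ → ℝ) (hρs : ContDiff ℝ (⊤ : ℕ∞) ρ)
    (hρsupp : Function.support ρ ⊆ Set.Ioo (-1) 1)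
    (ε b : ℝ) (hε : 0 < ε) (hb : 5 * ε ≤ b) : ContDiff ℝ (⊤ : ℕ∞) (chi0 ρ ε b) := by
  have hm : ContDiff ℝ (⊤ : ℕ∞) (mollifier ρ ε) := by
    unfold mollifier
    exact contDiff_const.mul (hρs.comp (contDiff_id.div_const ε))
  have hc : HasCompactSupport (mollifier ρ ε) := by
    refine HasCompactSupport.intro (K := Set.Icc (-ε) ε) isCompact_Icc ?_
    intro x hx
    apply moll_zero ρ hρsupp ε hε
    by_contra h
    push Not at h
    exact hx ⟨(abs_lt.mp h).1.le, (abs_lt.mp h).2.le⟩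
  have hn : LocallyIntegrable (nuFun ε b) volume := by
    apply Continuous.locallyIntegrable
    rw [nuFun_eq ε b hε hb]
    fun_prop
  have := hc.contDiff_convolution_right (ContinuousLinearMap.mul ℝ ℝ) hn hm
  convert this using 1
  funext x
  simp only [chi0, convolution, ContinuousLinearMap.mul_apply']
  congr 1
  funext y
  ring

lemma chi0_nonneg (ρ : ℝ → ℝ) (hρ0 : ∀ x, 0 ≤ ρ x)
    (ε b : ℝ) (hε : 0 < ε) (hb : 5 * ε ≤ b) (x : ℝ) : 0 ≤ chi0 ρ ε b x := by
  apply integral_nonneg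
  intro y
  exact mul_nonneg (mul_nonneg (inv_nonneg.mpr hε.le) (hρ0 _)) (nuFun_nonneg ε b hε hb y)

lemma chi0_left (ρ : ℝ → ℝ) (hρsupp : Function.support ρ ⊆ Set.Ioo (-1) 1)
    (ε b : ℝ) (hε : 0 < ε) (x : ℝ) (hx : x < ε) : chi0 ρ ε b x = 0 := by
  unfold chi0
  rw [← integral_zero ℝ ℝ]
  congr 1
  funext y
  by_cases hy : y ≤ 2 * ε
  · simp [nuFun, hy]
  · rw [moll_zero ρ hρsupp ε hε, zero_mul]
    rw [abs_of_nonpos (by linarith)]; linarith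

lemma chi0_right (ρ : ℝ → ℝ) (hρsupp : Function.support ρ ⊆ Set.Ioo (-1) 1)
    (hρint : ∫ x : ℝ, ρ x = 1)
    (ε b : ℝ) (hε : 0 < ε) (hb : 5 * ε ≤ b) (x : ℝ) (hx : b < x) : chi0 ρ ε b x = 1 := by
  unfold chi0
  rw [← moll_int ρ hρint ε hε, ← integral_sub_left_eq_self (mollifier ρ ε) volume x]
  congr 1
  funext y
  by_cases hy : y ≤ b - ε
  · rw [moll_zero ρ hρsupp ε hε, zero_mul]
    rw [abs_of_nonneg (by linarith)]; linarith
  · have : ¬ y ≤ 2 * ε := by linarith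
    simp [nuFun, hy, this]

theorem statement5 (ρ : ℝ → ℝ) (hρs : ContDiff ℝ (⊤ : ℕ∞) ρ) (hρc : HasCompactSupport ρ)
    (hρ0 : ∀ x, 0 ≤ ρ x) (hρe : ∀ x, ρ (-x) = ρ x)
    (hρsupp : Function.support ρ ⊆ Set.Ioo (-1) 1) (hρint : ∫ x : ℝ, ρ x = 1)
    (ε b : ℝ) (hε : 0 < ε) (hb : 5 * ε ≤ b) (n : ℕ) (hn : 1 ≤ n) :
    ∀ j ∈ ({1, 2, 3} : Set ℕ), ∃ c : ℝ, 0 < c ∧ ∀ x : ℝ,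
      |iteratedDeriv j (chiN ρ n ε b) x| ≤ c + chiN ρ n ε b x := by
  intro j hj
  have hj1 : 1 ≤ j := by
    simp only [Set.mem_insert_iff, Set.mem_singleton_iff] at hj
    omega
  have hsm : ContDiff ℝ (⊤ : ℕ∞) (chiN ρ n ε b) := by
    unfold chiN
    exact (contDiff_id.pow n).mul (chi0_contDiff ρ hρs hρsupp ε b hε hb)
  have hcont : Continuous (iteratedDeriv j (chiN ρ n ε b)) :=
    hsm.continuous_iteratedDeriv j (by exact_mod_cast le_top)
  set d : ℝ := (n.descFactorial j : ℝ) with hd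
  have hd0 : 0 ≤ d := Nat.cast_nonneg _
  set M : ℝ := max b (d + 1) with hM
  obtain ⟨C, hC⟩ := (isCompact_Icc (a := (0 : ℝ)) (b := M)).exists_bound_of_continuousOn
    hcont.continuousOn
  refine ⟨|C| + 1, by positivity, fun x => ?_⟩
  have hCa := le_abs_self C
  rcases lt_or_ge x 0 with hx | hx
  · have he : chiN ρ n ε b =ᶠ[nhds x] fun _ => 0 := by
      filter_upwards [Iio_mem_nhds (hx.trans hε)] with y hy
      simp [chiN, chi0_left ρ hρsupp ε b hε y hy]
    rw [he.iteratedDeriv_eq j, he.eq_of_nhds]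
    simp
    positivity
  have hnn : 0 ≤ chiN ρ n ε b x := mul_nonneg (pow_nonneg hx n) (chi0_nonneg ρ hρ0 ε b hε hb x)
  rcases le_or_gt x M with hxM | hxM
  · have := hC x ⟨hx, hxM⟩
    rw [Real.norm_eq_abs] at this
    linarith
  · have hxb : b < x := (le_max_left _ _).trans_lt hxM
    have hxd : d + 1 < x := (le_max_right _ _).trans_lt hxM
    have he : chiN ρ n ε b =ᶠ[nhds x] fun y => y ^ n := by
      filter_upwards [Ioi_mem_nhds hxb] with y hy
      simp [chiN, chi0_right ρ hρsupp hρint ε b hε hb y hy]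
    rw [he.iteratedDeriv_eq j, he.eq_of_nhds]
    have h1 : iteratedDeriv j (fun y : ℝ => y ^ n) x = d * x ^ (n - j) := by
      simp [hd]
    rw [h1, abs_of_nonneg (by positivity)]
    have h2 : d * x ^ (n - j) ≤ x ^ n := by
      calc d * x ^ (n - j) ≤ x * x ^ (n - j) := by gcongr; linarith
        _ = x ^ (n - j + 1) := by ring
        _ ≤ x ^ n := pow_le_pow_right₀ (by linarith) (by omega)
    have := abs_nonneg C
    linarith
end
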